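/- arXiv:2411.10808 — 2 statements merged into one kernel-verified Lean document; each statement's English description precedes it below -/
import Mathlib

section
/- Let M and G be real symmetric n×n matrices all of whose eigenvalues lie in [0,1] (equivalently, M, I_n − M, G, and I_n − G are all positive semidefinite), and suppose fix(M) ∩ fix(G) = {0}. Then ‖M G x‖₂ < ‖x‖₂ for every nonzero x ∈ ℝ^n, and consequently every complex eigenvalue of the product MG has modulus strictly less than 1. -/
open Matrix

/-- The Euclidean (ℓ²) norm on `Fin n → ℝ`. -/
noncomputable def norm2 {n : ℕ} (x : Fin n → ℝ) : ℝ := Real.sqrt (∑ i, x i ^ 2)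

/-!
A symmetric operator with eigenvalues in `(-1, 1]` strictly shrinks every vector it does not fix.
If both factors of a product have this property, the product strictly shrinks every vector that is
not fixed by both of them. Strict shrinking passes from a real matrix to its complexification,
because real and imaginary parts of a complex vector are mapped separately, and it forces an
eigenvalue `μ` with eigenvector `z` to satisfy `‖μ‖ ‖z‖ < ‖z‖`.
-/

open scoped InnerProductSpace
open WithLp (toLp)

section Paracontracting

variable {E : Type*} [Norm E]

/-- A map is paracontracting if it strictly decreases the norm of every vector that it does not fix.
For linear maps this is the notion of Elsner, Koltracht and Neumann; products of such maps
are controlled by their common fixed points. -/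
def IsParacontracting (f : E → E) : Prop :=
  ∀ x, f x ≠ x → ‖f x‖ < ‖x‖

namespace IsParacontracting

variable {f g : E → E}

theorem norm_apply_le (hf : IsParacontracting f) (x : E) : ‖f x‖ ≤ ‖x‖ := by
  by_cases hx : f x = x
  · rw [hx]
  · exact (hf x hx).le

theorem norm_apply_apply_lt (hf : IsParacontracting f) (hg : IsParacontracting g) {x : E}
    (hx : ¬(f x = x ∧ g x = x)) : ‖f (g x)‖ < ‖x‖ := by
  by_cases hgx : g x = x
  · rw [hgx]
    exact hf x fun hfx ↦ hx ⟨hfx, hgx⟩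
  · exact (hf.norm_apply_le (g x)).trans_lt (hg x hgx)

end IsParacontracting

end Paracontracting

section Symmetric

variable {𝕜 E : Type*} [RCLike 𝕜] [NormedAddCommGroup E] [InnerProductSpace 𝕜 E]

/-- This is `2 (1 - T²) = (1 - T) (1 + T) (1 - T) + (1 + T) (1 - T) (1 + T)` as an identity of
quadratic forms; it avoids the square root of `1 - T`. -/
theorem two_mul_norm_sq_sub_norm_sq_apply {T : E →ₗ[𝕜] E} (hT : T.IsSymmetric) (x : E) :
    2 * (‖x‖ ^ 2 - ‖T x‖ ^ 2) =
      RCLike.re ⟪(1 + T) (x - T x), x - T x⟫_𝕜 + RCLike.re ⟪(1 - T) (x + T x), x + T x⟫_𝕜 := by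
  have h_add : (1 + T) (x - T x) = x - T (T x) := by simp
  have h_sub : (1 - T) (x + T x) = x - T (T x) := by
    simp only [LinearMap.sub_apply, Module.End.one_apply, map_add]
    abel
  rw [h_add, h_sub, ← map_add, ← inner_add_right, sub_add_add_cancel, inner_add_right,
    inner_sub_left, hT (T x) x, map_add, map_sub, inner_self_eq_norm_sq, inner_self_eq_norm_sq,
    two_mul]

theorem isParacontracting_of_one_add_pos {T : E →ₗ[𝕜] E}
    (h_add : ∀ x ≠ 0, 0 < RCLike.re ⟪(1 + T) x, x⟫_𝕜) (h_sub : (1 - T).IsPositive) :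
    IsParacontracting T := by
  intro x hx
  have hT : T.IsSymmetric := by
    simpa using LinearMap.IsSymmetric.one.sub h_sub.isSymmetric
  have h_pos : 0 < 2 * (‖x‖ ^ 2 - ‖T x‖ ^ 2) := by
    rw [two_mul_norm_sq_sub_norm_sq_apply hT]
    exact add_pos_of_pos_of_nonneg (h_add _ (sub_ne_zero.2 (Ne.symm hx)))
      (h_sub.re_inner_nonneg_left _)
  exact lt_of_pow_lt_pow_left₀ 2 (norm_nonneg x) (by linarith)

end Symmetric

theorem norm_lt_one_of_hasEigenvalue {𝕜 E : Type*} [NormedField 𝕜] [NormedAddCommGroup E]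
    [NormedSpace 𝕜 E] {T : Module.End 𝕜 E} (hT : ∀ x ≠ 0, ‖T x‖ < ‖x‖) {μ : 𝕜}
    (hμ : T.HasEigenvalue μ) : ‖μ‖ < 1 := by
  obtain ⟨z, hz⟩ := hμ.exists_hasEigenvector
  have hlt : ‖μ‖ * ‖z‖ < ‖z‖ := by
    simpa only [hz.apply_eq_smul, norm_smul] using hT z hz.2
  exact lt_of_mul_lt_mul_right (by rwa [one_mul]) (norm_nonneg z)

section EuclideanSpace

variable {ι : Type*} [Fintype ι]

theorem norm2_eq_norm_toLp {n : ℕ} (x : Fin n → ℝ) : norm2 x = ‖toLp 2 x‖ := by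
  simp [norm2, EuclideanSpace.norm_eq]

theorem norm_sq_eq_norm_re_sq_add_norm_im_sq (z : EuclideanSpace ℂ ι) :
    ‖z‖ ^ 2 = ‖toLp 2 fun i ↦ (z i).re‖ ^ 2 + ‖toLp 2 fun i ↦ (z i).im‖ ^ 2 := by
  simp only [EuclideanSpace.norm_sq_eq, Complex.sq_norm, Complex.normSq_apply, Real.norm_eq_abs,
    sq_abs, ← sq, Finset.sum_add_distrib]

variable [DecidableEq ι]

open scoped ComplexOrder in
theorem isParacontracting_toEuclideanLin_of_posDef {𝕜 : Type*} [RCLike 𝕜] {A : Matrix ι ι 𝕜}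
    (h_add : (1 + A).PosDef) (h_sub : (1 - A).PosSemidef) :
    IsParacontracting (toEuclideanLin A) := by
  have h_one : (1 : Module.End 𝕜 (EuclideanSpace 𝕜 ι)) = toEuclideanLin (1 : Matrix ι ι 𝕜) :=
    (toLpLin_one 2).symm
  refine isParacontracting_of_one_add_pos (𝕜 := 𝕜) (fun x hx ↦ ?_) ?_
  · rw [h_one, ← map_add, inner_re_symm, EuclideanSpace.inner_eq_star_dotProduct,
      ofLp_toLpLin, toLin'_apply, dotProduct_comm]
    exact h_add.re_dotProduct_pos (by simpa using hx)
  · rwa [h_one, ← map_sub, isPositive_toEuclideanLin_iff]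

theorem norm_toEuclideanLin_map_ofReal_lt {κ : Type*} [Fintype κ] {B : Matrix κ ι ℝ}
    (hB : ∀ x ≠ 0, ‖toEuclideanLin B x‖ < ‖x‖) {z : EuclideanSpace ℂ ι} (hz : z ≠ 0) :
    ‖toEuclideanLin (B.map Complex.ofReal) z‖ < ‖z‖ := by
  let a : EuclideanSpace ℝ ι := toLp 2 fun i ↦ (z i).re
  let b : EuclideanSpace ℝ ι := toLp 2 fun i ↦ (z i).im
  let w : EuclideanSpace ℂ κ := toEuclideanLin (B.map Complex.ofReal) z
  have h_re : toEuclideanLin B a = toLp 2 fun i ↦ (w i).re := by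
    ext i
    simp [a, w, mulVec, dotProduct]
  have h_im : toEuclideanLin B b = toLp 2 fun i ↦ (w i).im := by
    ext i
    simp [b, w, mulVec, dotProduct]
  have h_le (x : EuclideanSpace ℝ ι) : ‖toEuclideanLin B x‖ ≤ ‖x‖ := by
    obtain rfl | hx := eq_or_ne x 0
    · simp
    · exact (hB x hx).le
  have h_ne : a ≠ 0 ∨ b ≠ 0 := by
    contrapose! hz
    ext i
    exact Complex.ext (congr($(hz.1) i)) (congr($(hz.2) i))
  suffices ‖w‖ ^ 2 < ‖z‖ ^ 2 from lt_of_pow_lt_pow_left₀ 2 (norm_nonneg z) this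
  rw [norm_sq_eq_norm_re_sq_add_norm_im_sq w, norm_sq_eq_norm_re_sq_add_norm_im_sq z,
    ← h_re, ← h_im]
  obtain h | h := h_ne
  · exact add_lt_add_of_lt_of_le (by gcongr; exact hB a h) (by gcongr; exact h_le b)
  · exact add_lt_add_of_le_of_lt (by gcongr; exact h_le a) (by gcongr; exact hB b h)

theorem norm_lt_one_of_mem_spectrum_map_ofReal {B : Matrix ι ι ℝ}
    (hB : ∀ x ≠ 0, ‖toEuclideanLin B x‖ < ‖x‖) {μ : ℂ}
    (hμ : μ ∈ spectrum ℂ (B.map Complex.ofReal)) : ‖μ‖ < 1 := by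
  rw [← spectrum_toLpLin 2, ← Module.End.hasEigenvalue_iff_mem_spectrum] at hμ
  exact norm_lt_one_of_hasEigenvalue (fun _ ↦ norm_toEuclideanLin_map_ofReal_lt hB) hμ

theorem stmt5_general {M G : Matrix ι ι ℝ} (hM : IsParacontracting (toEuclideanLin M))
    (hG : IsParacontracting (toEuclideanLin G))
    (hfix : ∀ x : ι → ℝ, M *ᵥ x = x → G *ᵥ x = x → x = 0) :
    (∀ x : ι → ℝ, x ≠ 0 → ‖toLp 2 ((M * G) *ᵥ x)‖ < ‖toLp 2 x‖) ∧
      ∀ μ ∈ spectrum ℂ ((M * G).map Complex.ofReal), ‖μ‖ < 1 := by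
  have h_lt (x : ι → ℝ) (hx : x ≠ 0) : ‖toLp 2 ((M * G) *ᵥ x)‖ < ‖toLp 2 x‖ := by
    rw [← mulVec_mulVec]
    refine hM.norm_apply_apply_lt hG (x := toLp 2 x) fun ⟨hMx, hGx⟩ ↦ hx ?_
    exact hfix x congr(($hMx).ofLp) congr(($hGx).ofLp)
  refine ⟨h_lt, fun μ ↦ norm_lt_one_of_mem_spectrum_map_ofReal fun x hx ↦ h_lt x.ofLp ?_⟩
  simpa using hx

end EuclideanSpace

theorem stmt5 (n : ℕ) (M G : Matrix (Fin n) (Fin n) ℝ)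
    (hM : M.PosSemidef) (hM1 : ((1 : Matrix (Fin n) (Fin n) ℝ) - M).PosSemidef)
    (hG : G.PosSemidef) (hG1 : ((1 : Matrix (Fin n) (Fin n) ℝ) - G).PosSemidef)
    (hfix : ∀ x : Fin n → ℝ, M *ᵥ x = x → G *ᵥ x = x → x = 0) :
    (∀ x : Fin n → ℝ, x ≠ 0 → norm2 ((M * G) *ᵥ x) < norm2 x) ∧
    (∀ μ ∈ spectrum ℂ ((M * G).map Complex.ofReal), ‖μ‖ < 1) := by
  simpa only [norm2_eq_norm_toLp] using
    stmt5_general (isParacontracting_toEuclideanLin_of_posDef (PosDef.one.add_posSemidef hM) hM1)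
      (isParacontracting_toEuclideanLin_of_posDef (PosDef.one.add_posSemidef hG) hG1) hfix
end

section
/- Let W be a real symmetric n×n matrix that is positive semidefinite, stochastic (entrywise nonnegative with each row summing to 1), and irreducible, let A be a real m×n matrix with A𝟙 ≠ 0, and b ∈ ℝ^m. Fix λ > 0 and L ≥ 1, set μ = (λL)^{−1} and θ = 1/L, and let α_k = (t_k − 1)/t_{k+1} where t₁ = 1 and t_{k+1} = (1 + √(1 + 4t_k²))/2. Then there exists a unique x* ∈ ℝ^n such that for all initializations x₀, v₀ ∈ ℝ^n, the RED-APG iterates defined for k ≥ 1 by x_k = (I_n + μAᵀA)^{−1}(v_{k−1} + μAᵀb), y_k = x_k + α_k(x_k − x_{k−1}), v_k = θ W y_k + (1−θ) y_k, converge linearly to x*: there exist C > 0, β ∈ [0,1), and K ≥ 1 such that ‖x_k − x*‖₂ ≤ C·β^k for all k ≥ K. -/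
open Filter Matrix

/-!
Put `G = θW + (1 - θ)I` and `H = I + μAᵀA - G = θ(I - W) + μAᵀA`. The Dirichlet form of `W`
vanishes only at constant vectors, and those are detected by `A`, so `H` is positive definite.
The iteration reads `(H + G) x_{k+1} = G (x_k + α_k (x_k - x_{k-1})) + μAᵀb`; with
`x* = H⁻¹ (μAᵀb)`, `e_k = x_k - x*` and `d_k = x_k - x_{k-1}` this becomes
`G (d_{k+1} - α_k d_k) + H e_{k+1} = 0`, an implicit discretization of a damped oscillator.
The energy `⟨e, He⟩ + ⟨d, Gd⟩` does not grow, but it need not contract when `α_k = 1`; adding the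
cross term `⟨e, Gd⟩ / (2κ)`, where `G ≤ κH`, makes it contract at a uniform rate.
-/

section ConvergesLinearly

variable {E F : Type*} [NormedAddCommGroup E] [NormedAddCommGroup F]

/-- R-linear convergence of the sequence `u` to `a`: the error is eventually dominated by a
geometric sequence of ratio less than one. It is laid out exactly as in the conclusion of
`stmt17`. -/
def ConvergesLinearly (u : ℕ → E) (a : E) : Prop :=
  ∃ C, 0 < C ∧ ∃ β, 0 ≤ β ∧ β < 1 ∧ ∃ K, 1 ≤ K ∧ ∀ k, K ≤ k → ‖u k - a‖ ≤ C * β ^ k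

theorem ConvergesLinearly.tendsto {u : ℕ → E} {a : E} (h : ConvergesLinearly u a) :
    Tendsto u atTop (nhds a) := by
  obtain ⟨C, -, β, hβ0, hβ1, K, -, hK⟩ := h
  have hgeom : Tendsto (fun k ↦ C * β ^ k) atTop (nhds 0) := by
    simpa using (tendsto_pow_atTop_nhds_zero_of_lt_one hβ0 hβ1).const_mul C
  rw [tendsto_iff_norm_sub_tendsto_zero]
  exact squeeze_zero' (.of_forall fun _ ↦ norm_nonneg _) (eventually_atTop.2 ⟨K, hK⟩) hgeom

theorem ConvergesLinearly.of_norm_sq_le {u : ℕ → E} {a : E} {C r : ℝ} (hr0 : 0 < r) (hr1 : r < 1)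
    (h : ∀ k, ‖u (k + 1) - a‖ ^ 2 ≤ C * r ^ k) : ConvergesLinearly u a := by
  refine ⟨√(C / r) + 1, by positivity, √r, Real.sqrt_nonneg r, ?_, 1, le_rfl, fun k hk ↦ ?_⟩
  · rwa [Real.sqrt_lt' one_pos, one_pow]
  obtain ⟨j, rfl⟩ := Nat.exists_eq_add_of_le' hk
  calc ‖u (j + 1) - a‖ ≤ √(C / r * r ^ (j + 1)) := by
        refine Real.le_sqrt_of_sq_le ((h j).trans_eq ?_)
        rw [pow_succ']
        field_simp
    _ = √(C / r) * √r ^ (j + 1) := by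
        rw [Real.sqrt_mul' _ (by positivity), ← Real.sqrt_sq (by positivity : 0 ≤ √r ^ (j + 1)),
          pow_right_comm, Real.sq_sqrt hr0.le]
    _ ≤ (√(C / r) + 1) * √r ^ (j + 1) := by gcongr; linarith

variable [NormedSpace ℝ E] [NormedSpace ℝ F]

theorem ConvergesLinearly.map (f : E →L[ℝ] F) {u : ℕ → E} {a : E} (h : ConvergesLinearly u a) :
    ConvergesLinearly (fun k ↦ f (u k)) (f a) := by
  obtain ⟨C, hC, β, hβ0, hβ1, K, hK1, hK⟩ := h
  refine ⟨(‖f‖ + 1) * C, by positivity, β, hβ0, hβ1, K, hK1, fun k hk ↦ ?_⟩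
  calc ‖f (u k) - f a‖ = ‖f (u k - a)‖ := by rw [map_sub]
    _ ≤ ‖f‖ * ‖u k - a‖ := f.le_opNorm _
    _ ≤ (‖f‖ + 1) * (C * β ^ k) := by gcongr; exacts [by linarith, hK k hk]
    _ = (‖f‖ + 1) * C * β ^ k := by ring

theorem convergesLinearly_map_iff (f : E ≃L[ℝ] F) {u : ℕ → E} {a : E} :
    ConvergesLinearly (fun k ↦ f (u k)) (f a) ↔ ConvergesLinearly u a :=
  ⟨fun h ↦ by simpa using h.map (f.symm : F →L[ℝ] E), fun h ↦ h.map (f : E →L[ℝ] F)⟩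

theorem convergesLinearly_iff_norm2 {n : ℕ} {u : ℕ → Fin n → ℝ} {a : Fin n → ℝ} :
    ConvergesLinearly u a ↔ ∃ C, 0 < C ∧ ∃ β, 0 ≤ β ∧ β < 1 ∧ ∃ K, 1 ≤ K ∧ ∀ k, K ≤ k →
      norm2 (u k - a) ≤ C * β ^ k := by
  rw [← convergesLinearly_map_iff (EuclideanSpace.equiv (Fin n) ℝ).symm]
  simp [ConvergesLinearly, norm2, EuclideanSpace.norm_eq]

end ConvergesLinearly

theorem exists_forall_le_mul_of_homogeneous {E : Type*} [NormedAddCommGroup E] [NormedSpace ℝ E]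
    [ProperSpace E] {p q : E → ℝ} (hp : Continuous p) (hq : Continuous q)
    (hp_smul : ∀ (c : ℝ) x, p (c • x) = c ^ 2 * p x)
    (hq_smul : ∀ (c : ℝ) x, q (c • x) = c ^ 2 * q x) (hq_pos : ∀ x ≠ 0, 0 < q x) :
    ∃ κ, ∀ x, p x ≤ κ * q x := by
  have hcont : ContinuousOn (fun x ↦ p x / q x) (Metric.sphere 0 1) :=
    hp.continuousOn.div hq.continuousOn fun x hx ↦
      (hq_pos x (ne_zero_of_mem_unit_sphere ⟨x, hx⟩)).ne'
  obtain ⟨κ, hκ⟩ := (isCompact_sphere (0 : E) 1).bddAbove_image hcont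
  refine ⟨κ, fun x ↦ ?_⟩
  obtain rfl | hx := eq_or_ne x 0
  · have hp0 : p 0 = 0 := by simpa using hp_smul 0 0
    have hq0 : q 0 = 0 := by simpa using hq_smul 0 0
    simp [hp0, hq0]
  have hx' : ‖x‖ ≠ 0 := norm_ne_zero_iff.2 hx
  have hratio : p (‖x‖⁻¹ • x) / q (‖x‖⁻¹ • x) = p x / q x := by
    rw [hp_smul, hq_smul, mul_div_mul_left _ _ (by positivity)]
  rw [← div_le_iff₀ (hq_pos x hx), ← hratio]
  exact hκ ⟨_, by simp [norm_smul, hx'], rfl⟩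

section MomentumEnergy

variable {E : Type*} [AddCommGroup E] [Module ℝ E] {g h : LinearMap.BilinForm ℝ E}

theorem neg_two_mul_apply_le (hg : g.IsPosSemidef) (s : ℝ) (x y : E) :
    -(2 * s * g x y) ≤ g x x + s ^ 2 * g y y := by
  have hnonneg := hg.nonneg (x + s • y)
  simp only [map_add, map_smul, LinearMap.add_apply, LinearMap.smul_apply, smul_eq_mul,
    hg.eq y x] at hnonneg
  linarith

/-- The Lyapunov function of the momentum iteration at error `e` and last increment `d`: the
potential energy `h e e` plus the kinetic energy `g d d`, corrected by a small cross term. -/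
noncomputable def momentumEnergy (g h : LinearMap.BilinForm ℝ E) (κ : ℝ) (e d : E) : ℝ :=
  h e e + g d d + (2 * κ)⁻¹ * g e d

theorem potential_add_kinetic_le (hg : g.IsPosSemidef) (hh : h.IsSymm) {a : ℝ} (ha : 0 ≤ a)
    {e d d' : E} (hstep : g (d' - a • d) + h (e + d') = 0) :
    h (e + d') (e + d') + (2 - a) * g d' d' + h d' d' ≤ h e e + a * g d d := by
  have htest := DFunLike.congr_fun hstep d'
  have hpolar := mul_le_mul_of_nonneg_left (neg_two_mul_apply_le hg (-1) d d') ha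
  simp only [map_add, map_sub, map_smul, LinearMap.add_apply, LinearMap.sub_apply,
    LinearMap.smul_apply, LinearMap.zero_apply, smul_eq_mul, hh.eq d' e] at htest ⊢
  linarith

theorem cross_term_le (hg : g.IsSymm) (hh : h.IsPosSemidef) {a : ℝ}
    {e d d' : E} (hstep : g (d' - a • d) + h (e + d') = 0) :
    g (e + d') d' ≤ a * g e d + g d' d' + (h d' d' - h (e + d') (e + d')) / 2 := by
  have htest := DFunLike.congr_fun hstep e
  simp only [map_add, map_sub, map_smul, LinearMap.add_apply, LinearMap.sub_apply,
    LinearMap.smul_apply, LinearMap.zero_apply, smul_eq_mul, hh.eq d' e, hg.eq d' e,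
    hg.eq d e] at htest ⊢
  linarith [hh.nonneg e]

variable {κ : ℝ}

theorem apply_self_le_two_mul_momentumEnergy (hg : g.IsPosSemidef) (hh : h.IsNonneg) (hκ : 1 ≤ κ)
    (hgh : ∀ x, g x x ≤ κ * h x x) (e d : E) : h e e ≤ 2 * momentumEnergy g h κ e d := by
  have hpolar := neg_two_mul_apply_le hg (4 * κ)⁻¹ d e
  rw [hg.eq d e] at hpolar
  have hkinetic : (4 * κ)⁻¹ ^ 2 * g e e ≤ 1 / 16 * h e e :=
    calc (4 * κ)⁻¹ ^ 2 * g e e ≤ (4 * κ)⁻¹ ^ 2 * (κ * h e e) := by gcongr; exact hgh e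
      _ = 1 / (16 * κ) * h e e := by field_simp; ring
      _ ≤ 1 / 16 * h e e := by
        gcongr
        exacts [hh.nonneg e, by linarith]
  have hcoeff : 2 * (4 * κ)⁻¹ = (2 * κ)⁻¹ := by field_simp; norm_num
  rw [hcoeff] at hpolar
  unfold momentumEnergy
  linarith [hh.nonneg e]

theorem momentumEnergy_le (hg : g.IsPosSemidef) (hh : h.IsNonneg) (hκ : 1 ≤ κ)
    (hgh : ∀ x, g x x ≤ κ * h x x) (e d : E) :
    momentumEnergy g h κ e d ≤ 2 * κ * (h e e + h d d) := by
  have hpolar := neg_two_mul_apply_le hg (-1) e d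
  have hcross : (2 * κ)⁻¹ * g e d ≤ (h e e + h d d) / 4 :=
    calc (2 * κ)⁻¹ * g e d ≤ (2 * κ)⁻¹ * ((κ * h e e + κ * h d d) / 2) := by
          gcongr
          linarith [hgh e, hgh d]
      _ = (h e e + h d d) / 4 := by field_simp; ring
  have he := mul_le_mul_of_nonneg_right hκ (hh.nonneg e)
  have hd := mul_le_mul_of_nonneg_right hκ (hh.nonneg d)
  unfold momentumEnergy
  linarith [hgh d, hh.nonneg e, hh.nonneg d]

theorem sq_mul_apply_self_le (hg : g.IsPosSemidef) (hκ : 0 < κ)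
    (hgh : ∀ x, g x x ≤ κ * h x x) (e d : E) :
    (4 * κ)⁻¹ ^ 2 * g e e ≤ (8 * κ)⁻¹ * (h (e + d) (e + d) + h d d) := by
  have hparallelogram : g e e ≤ 2 * (g (e + d) (e + d) + g d d) := by
    have hpolar := neg_two_mul_apply_le hg 2 e d
    simp only [map_add, LinearMap.add_apply, hg.eq d e]
    linarith
  calc (4 * κ)⁻¹ ^ 2 * g e e
      ≤ (4 * κ)⁻¹ ^ 2 * (2 * (κ * h (e + d) (e + d) + κ * h d d)) := by
        gcongr
        linarith [hgh (e + d), hgh d]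
    _ = (8 * κ)⁻¹ * (h (e + d) (e + d) + h d d) := by field_simp; ring

theorem momentumEnergy_add_le (hg : g.IsPosSemidef) (hh : h.IsPosSemidef) (hκ : 1 ≤ κ)
    (hgh : ∀ x, g x x ≤ κ * h x x) {a : ℝ} (ha : a ∈ Set.Icc 0 1) {e d d' : E}
    (hstep : g (d' - a • d) + h (e + d') = 0) :
    momentumEnergy g h κ (e + d') d' + (8 * κ)⁻¹ * (h (e + d') (e + d') + h d' d') ≤
      momentumEnergy g h κ e d := by
  have henergy := potential_add_kinetic_le hg hh.isSymm ha.1 hstep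
  have hcross := mul_le_mul_of_nonneg_left (cross_term_le hg.isSymm hh hstep)
    (by positivity : 0 ≤ (2 * κ)⁻¹)
  have hsq := sq_mul_apply_self_le hg (one_pos.trans_le hκ) hgh e d'
  have hdamping : -((8 * κ)⁻¹ * (h (e + d') (e + d') + h d' d')) ≤
      (1 - a) * (g d d + (2 * κ)⁻¹ * g e d) := by
    have hpolar := mul_le_mul_of_nonneg_left (neg_two_mul_apply_le hg (4 * κ)⁻¹ d e)
      (sub_nonneg.2 ha.2)
    have hscale : (1 - a) * ((4 * κ)⁻¹ ^ 2 * g e e) ≤ (4 * κ)⁻¹ ^ 2 * g e e :=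
      mul_le_of_le_one_left (mul_nonneg (sq_nonneg _) (hg.nonneg e)) (by linarith [ha.1])
    rw [hg.eq d e] at hpolar
    simp only [mul_inv] at hpolar hscale hsq ⊢
    linarith
  have hkinetic : (2 * κ)⁻¹ * g d' d' ≤ h d' d' / 2 :=
    calc (2 * κ)⁻¹ * g d' d' ≤ (2 * κ)⁻¹ * (κ * h d' d') := by gcongr; exact hgh d'
      _ = h d' d' / 2 := by field_simp
  have hpotential : (2 * κ)⁻¹ * h d' d' ≤ h d' d' / 2 := by
    have hinv : (2 * κ)⁻¹ ≤ 2⁻¹ := by gcongr; linarith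
    linarith [mul_le_mul_of_nonneg_right hinv (hh.nonneg d')]
  have hleft := mul_nonneg (sub_nonneg.2 ha.2) (hg.nonneg d')
  unfold momentumEnergy
  simp only [mul_inv] at hcross hdamping hkinetic hpotential ⊢
  linarith

theorem momentumEnergy_contraction (hg : g.IsPosSemidef) (hh : h.IsPosSemidef) (hκ : 1 ≤ κ)
    (hgh : ∀ x, g x x ≤ κ * h x x) {a : ℝ} (ha : a ∈ Set.Icc 0 1) {e d d' : E}
    (hstep : g (d' - a • d) + h (e + d') = 0) :
    momentumEnergy g h κ (e + d') d' ≤ (1 + (4 * κ)⁻¹ ^ 2)⁻¹ * momentumEnergy g h κ e d := by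
  rw [le_inv_mul_iff₀ (by positivity), one_add_mul]
  calc momentumEnergy g h κ (e + d') d' + (4 * κ)⁻¹ ^ 2 * momentumEnergy g h κ (e + d') d'
      ≤ momentumEnergy g h κ (e + d') d' +
          (4 * κ)⁻¹ ^ 2 * (2 * κ * (h (e + d') (e + d') + h d' d')) := by
        gcongr
        exact momentumEnergy_le hg hh.isNonneg hκ hgh _ _
    _ = momentumEnergy g h κ (e + d') d' +
          (8 * κ)⁻¹ * (h (e + d') (e + d') + h d' d') := by field_simp; ring
    _ ≤ momentumEnergy g h κ e d := momentumEnergy_add_le hg hh hκ hgh ha hstep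

end MomentumEnergy

theorem exists_norm_sq_add_apply_self_le {E : Type*} [NormedAddCommGroup E] [NormedSpace ℝ E]
    [FiniteDimensional ℝ E] (g : LinearMap.BilinForm ℝ E) {h : LinearMap.BilinForm ℝ E}
    (hpos : h.toQuadraticMap.PosDef) : ∃ κ, 1 ≤ κ ∧ ∀ x, ‖x‖ ^ 2 + g x x ≤ κ * h x x := by
  have hcont (f : LinearMap.BilinForm ℝ E) : Continuous fun x ↦ f x x :=
    f.toContinuousBilinearMap.continuous₂.comp (continuous_id.prodMk continuous_id)
  have := FiniteDimensional.proper ℝ E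
  obtain ⟨κ, hκ⟩ := exists_forall_le_mul_of_homogeneous
    (p := fun x : E ↦ ‖x‖ ^ 2 + g x x) (q := fun x ↦ h x x)
    ((continuous_norm.pow 2).add (hcont g)) (hcont h)
    (fun c x ↦ by
      simp only [norm_smul, mul_pow, Real.norm_eq_abs, sq_abs, map_smul, LinearMap.smul_apply,
        smul_eq_mul]
      ring)
    (fun c x ↦ by simp only [map_smul, LinearMap.smul_apply, smul_eq_mul]; ring) hpos
  exact ⟨max 1 κ, le_max_left _ _, fun x ↦ (hκ x).trans <|
    mul_le_mul_of_nonneg_right (le_max_right _ _) (hpos.nonneg x)⟩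

theorem convergesLinearly_of_momentum_step {E : Type*} [NormedAddCommGroup E] [NormedSpace ℝ E]
    [FiniteDimensional ℝ E] {g h : LinearMap.BilinForm ℝ E} (hg : g.IsPosSemidef) (hh : h.IsSymm)
    (hpos : h.toQuadraticMap.PosDef) {α : ℕ → ℝ} (hα : ∀ k, α k ∈ Set.Icc 0 1) {x : ℕ → E} {a : E}
    (hstep : ∀ k, g (x (k + 2) - x (k + 1) - α k • (x (k + 1) - x k)) + h (x (k + 2) - a) = 0) :
    ConvergesLinearly x a := by
  have hh' : h.IsPosSemidef := ⟨hh, ⟨hpos.nonneg⟩⟩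
  obtain ⟨κ, hκ, hcmp⟩ := exists_norm_sq_add_apply_self_le g hpos
  have hnorm y : ‖y‖ ^ 2 ≤ κ * h y y := by linarith [hcmp y, hg.nonneg y]
  have hgh y : g y y ≤ κ * h y y := by linarith [hcmp y, sq_nonneg ‖y‖]
  set r := (1 + (4 * κ)⁻¹ ^ 2)⁻¹
  set V : ℕ → ℝ := fun k ↦ momentumEnergy g h κ (x (k + 1) - a) (x (k + 1) - x k)
  have hr0 : 0 < r := by positivity
  have hr1 : r < 1 := inv_lt_one_of_one_lt₀ <| lt_add_of_pos_right _ (by positivity)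
  have hV k : V k ≤ r ^ k * V 0 := by
    refine le_geom hr0.le k fun j _ ↦ ?_
    have herror : x (j + 2) - a = x (j + 1) - a + (x (j + 2) - x (j + 1)) := by abel
    have hstep_j := hstep j
    simp only [V, herror] at hstep_j ⊢
    exact momentumEnergy_contraction hg hh' hκ hgh (hα j) hstep_j
  refine .of_norm_sq_le hr0 hr1 (C := 2 * κ * V 0) fun k ↦ ?_
  calc ‖x (k + 1) - a‖ ^ 2 ≤ κ * h (x (k + 1) - a) (x (k + 1) - a) := hnorm _
    _ ≤ κ * (2 * V k) := by
        gcongr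
        exact apply_self_le_two_mul_momentumEnergy hg hh'.isNonneg hκ hgh _ _
    _ ≤ κ * (2 * (r ^ k * V 0)) := by gcongr; exact hV k
    _ = 2 * κ * V 0 * r ^ k := by ring

section Matrix

variable {ι : Type*}

theorem isSymm_of_smul_add_smul_one [DecidableEq ι] {K : Type*} [Field K] {W : Matrix ι ι K}
    {s r : K} (hs : s ≠ 0) (h : (s • W + r • 1).IsSymm) : W.IsSymm := by
  have hW : W = s⁻¹ • (s • W + r • 1 - r • 1) := by simp [hs]
  rw [hW]
  exact (h.sub (isSymm_one.smul r)).smul s⁻¹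

variable [Fintype ι]

theorem posDef_add_of_ker_inf_eq_bot {P Q : Matrix ι ι ℝ} (hP : P.PosSemidef) (hQ : Q.PosSemidef)
    (hker : ∀ x, P *ᵥ x = 0 → Q *ᵥ x = 0 → x = 0) : (P + Q).PosDef := by
  refine .of_dotProduct_mulVec_pos (hP.add hQ).isHermitian fun x hx ↦ ?_
  have hPx := hP.dotProduct_mulVec_nonneg x
  have hQx := hQ.dotProduct_mulVec_nonneg x
  rw [add_mulVec, dotProduct_add]
  refine (add_nonneg hPx hQx).lt_of_ne' fun hzero ↦ hx (hker x ?_ ?_)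
  · exact (hP.dotProduct_mulVec_zero_iff x).1 (by linarith)
  · exact (hQ.dotProduct_mulVec_zero_iff x).1 (by linarith)

variable [DecidableEq ι]

theorem isPosSemidef_toBilin' {M : Matrix ι ι ℝ} (hM : M.PosSemidef) : M.toBilin'.IsPosSemidef :=
  ⟨isSymm_toBilin'_iff_isSymm.2 (isHermitian_iff_isSymm.1 hM.isHermitian), ⟨fun x ↦ by
    simpa [toBilin'_apply'] using hM.dotProduct_mulVec_nonneg x⟩⟩

theorem posDef_toQuadraticMap_toBilin' {M : Matrix ι ι ℝ} (hM : M.PosDef) :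
    M.toBilin'.toQuadraticMap.PosDef := fun x hx ↦ by
  simpa [toBilin'_apply'] using hM.dotProduct_mulVec_pos hx

theorem mulVec_inv_mulVec {R : Type*} [CommRing R] {M : Matrix ι ι R} (hM : IsUnit M) (z : ι → R) :
    M *ᵥ (M⁻¹ *ᵥ z) = z := by
  rw [mulVec_mulVec, mul_nonsing_inv M ((isUnit_iff_isUnit_det M).1 hM), one_mulVec]

theorem inv_sub_mulVec_eq_inv_mulVec {R : Type*} [CommRing R] {M G : Matrix ι ι R} (hM : IsUnit M)
    (hMG : IsUnit (M - G)) (c : ι → R) :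
    (M - G)⁻¹ *ᵥ c = M⁻¹ *ᵥ (G *ᵥ ((M - G)⁻¹ *ᵥ c) + c) := by
  have := hM.invertible
  refine (inv_mulVec_eq_vec ?_).symm
  rw [eq_comm, ← sub_eq_iff_eq_add', ← sub_mulVec, mulVec_inv_mulVec hMG]

theorem convergesLinearly_of_eq_inv_mulVec {M G : Matrix ι ι ℝ} (hG : G.PosSemidef)
    (hMG : (M - G).PosDef) (c : ι → ℝ) {α : ℕ → ℝ} (hα : ∀ k, α k ∈ Set.Icc 0 1) {x : ℕ → ι → ℝ}
    (hx : ∀ k, x (k + 2) = M⁻¹ *ᵥ (G *ᵥ (x (k + 1) + α k • (x (k + 1) - x k)) + c)) :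
    ConvergesLinearly x ((M - G)⁻¹ *ᵥ c) := by
  have hM : M.PosDef := by simpa using hMG.add_posSemidef hG
  set a := (M - G)⁻¹ *ᵥ c
  have hg := isPosSemidef_toBilin' hG
  have hh := (isPosSemidef_toBilin' hMG.posSemidef).isSymm
  refine convergesLinearly_of_momentum_step hg hh (posDef_toQuadraticMap_toBilin' hMG) hα
    fun k ↦ LinearMap.ext fun w ↦ ?_
  have hMx : M *ᵥ x (k + 2) = G *ᵥ (x (k + 1) + α k • (x (k + 1) - x k)) + c := by
    rw [hx, mulVec_inv_mulVec hM.isUnit]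
  have hMGa : (M - G) *ᵥ a = c := mulVec_inv_mulVec hMG.isUnit c
  have hzero : G *ᵥ (x (k + 2) - x (k + 1) - α k • (x (k + 1) - x k)) +
      (M - G) *ᵥ (x (k + 2) - a) = 0 := by
    rw [mulVec_sub (M - G), hMGa, sub_mulVec, hMx]
    simp only [mulVec_add, mulVec_sub]
    abel
  rw [LinearMap.add_apply, hg.eq, hh.eq, toBilin'_apply', toBilin'_apply', ← dotProduct_add, hzero,
    dotProduct_zero, LinearMap.zero_apply]

theorem two_mul_dotProduct_one_sub_mulVec {R : Type*} [CommRing R] {W : Matrix ι ι R}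
    (hsymm : W.IsSymm) (hrow : ∀ i, ∑ j, W i j = 1) (x : ι → R) :
    2 * (x ⬝ᵥ (1 - W) *ᵥ x) = ∑ i, ∑ j, W i j * (x i - x j) ^ 2 := by
  have hrows : ∑ i, ∑ j, W i j * x i ^ 2 = x ⬝ᵥ x := by
    simp only [← Finset.sum_mul, hrow, one_mul, dotProduct, sq]
  have hcols : ∑ i, ∑ j, W i j * x j ^ 2 = x ⬝ᵥ x := by
    rw [Finset.sum_comm, ← hrows]
    simp only [hsymm.apply]
  have hcross : ∑ i, ∑ j, W i j * (x i * x j) = x ⬝ᵥ W *ᵥ x := by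
    simp only [dotProduct, mulVec, Finset.mul_sum, mul_left_comm]
  have hexpand i j : W i j * (x i - x j) ^ 2 =
      W i j * x i ^ 2 + W i j * x j ^ 2 - 2 * (W i j * (x i * x j)) := by ring
  simp only [hexpand, Finset.sum_sub_distrib, Finset.sum_add_distrib, ← Finset.mul_sum, hrows,
    hcols, hcross, sub_mulVec, one_mulVec, dotProduct_sub]
  ring

theorem posSemidef_one_sub {W : Matrix ι ι ℝ} (hsymm : W.IsSymm) (hnonneg : ∀ i j, 0 ≤ W i j)
    (hrow : ∀ i, ∑ j, W i j = 1) : (1 - W).PosSemidef := by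
  refine .of_dotProduct_mulVec_nonneg (isHermitian_one.sub (isHermitian_iff_isSymm.2 hsymm))
    fun x ↦ ?_
  have hsum : 0 ≤ ∑ i, ∑ j, W i j * (x i - x j) ^ 2 :=
    Finset.sum_nonneg fun i _ ↦ Finset.sum_nonneg fun j _ ↦
      mul_nonneg (hnonneg i j) (sq_nonneg _)
  rw [star_trivial]
  linarith [two_mul_dotProduct_one_sub_mulVec hsymm hrow x]

theorem commute_diagonal_iff {R : Type*} [CommRing R] {x : ι → R} {M : Matrix ι ι R} :
    Commute (diagonal x) M ↔ ∀ i j, M i j * (x i - x j) = 0 := by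
  simp only [commute_iff_eq, ← ext_iff, diagonal_mul, mul_diagonal, mul_sub, sub_eq_zero,
    mul_comm (x _)]

theorem eq_of_commute_diagonal {W : Matrix ι ι ℝ} (hirr : W.IsIrreducible) {x : ι → ℝ}
    (hcomm : Commute (diagonal x) W) (i j : ι) : x i = x j := by
  obtain ⟨k, -, hk⟩ := (isIrreducible_iff_exists_pow_pos hirr.nonneg).1 hirr i j
  have hmul := commute_diagonal_iff.1 (hcomm.pow_right k) i j
  exact sub_eq_zero.1 ((mul_eq_zero.1 hmul).resolve_left hk.ne')

omit [DecidableEq ι] in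
theorem eq_of_mulVec_eq_self {W : Matrix ι ι ℝ} (hirr : W.IsIrreducible) (hsymm : W.IsSymm)
    (hrow : ∀ i, ∑ j, W i j = 1) {x : ι → ℝ} (hx : W *ᵥ x = x) (i j : ι) : x i = x j := by
  classical
  refine eq_of_commute_diagonal hirr (commute_diagonal_iff.2 fun i j ↦ ?_) i j
  have hterm_nonneg i j : 0 ≤ W i j * (x i - x j) ^ 2 := mul_nonneg (hirr.nonneg i j) (sq_nonneg _)
  have hsum : ∑ i, ∑ j, W i j * (x i - x j) ^ 2 = 0 := by
    simp [← two_mul_dotProduct_one_sub_mulVec hsymm hrow, sub_mulVec, hx]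
  have hterm : W i j * (x i - x j) ^ 2 = 0 := by
    simp only [Finset.sum_eq_zero_iff_of_nonneg, hterm_nonneg, Finset.sum_nonneg, implies_true,
      Finset.mem_univ, forall_const] at hsum
    exact hsum i j
  simpa using hterm

theorem posDef_smul_one_sub_add {W Q : Matrix ι ι ℝ} (hirr : W.IsIrreducible) (hsymm : W.IsSymm)
    (hrow : ∀ i, ∑ j, W i j = 1) (hQ : Q.PosSemidef) (hQ1 : Q *ᵥ (fun _ ↦ 1) ≠ 0) {θ : ℝ}
    (hθ : 0 < θ) : (θ • (1 - W) + Q).PosDef := by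
  refine posDef_add_of_ker_inf_eq_bot ((posSemidef_one_sub hsymm hirr.nonneg hrow).smul hθ.le) hQ
    fun x hWx hQx ↦ ?_
  have hfix : W *ᵥ x = x := by
    simpa [smul_mulVec, hθ.ne', sub_mulVec, sub_eq_zero, eq_comm] using hWx
  ext i
  have hconst : x = x i • fun _ ↦ 1 := by
    ext j
    simp [eq_of_mulVec_eq_self hirr hsymm hrow hfix i j]
  rw [hconst, mulVec_smul] at hQx
  exact (smul_eq_zero.1 hQx).resolve_right hQ1

theorem posDef_one_add_smul_sub {m : Type*} [Fintype m] {W : Matrix ι ι ℝ} {A : Matrix m ι ℝ}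
    (hirr : W.IsIrreducible) (hsymm : W.IsSymm) (hrow : ∀ i, ∑ j, W i j = 1)
    (hA1 : A *ᵥ (fun _ ↦ 1) ≠ 0) {μ θ : ℝ} (hμ : 0 < μ) (hθ : 0 < θ) :
    (1 + μ • (Aᵀ * A) - (θ • W + (1 - θ) • 1)).PosDef := by
  have hsplit : 1 + μ • (Aᵀ * A) - (θ • W + (1 - θ) • 1) = θ • (1 - W) + μ • (Aᴴ * A) := by
    rw [conjTranspose_eq_transpose_of_trivial]
    module
  rw [hsplit]
  refine posDef_smul_one_sub_add hirr hsymm hrow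
    ((posSemidef_conjTranspose_mul_self A).smul hμ.le) ?_ hθ
  rw [smul_mulVec]
  exact smul_ne_zero hμ.ne' ((conjTranspose_mul_self_mulVec_eq_zero A _).not.2 hA1)

end Matrix

section FISTA

theorem le_one_add_sqrt_div_two (s : ℝ) : s ≤ (1 + √(1 + 4 * s ^ 2)) / 2 := by
  have hsqrt : 2 * s ≤ √(1 + 4 * s ^ 2) := Real.le_sqrt_of_sq_le (by linarith)
  linarith

theorem fista_momentum_mem_Icc {t : ℕ → ℝ} (ht1 : 1 ≤ t 1)
    (ht : ∀ k, 1 ≤ k → t (k + 1) = (1 + √(1 + 4 * t k ^ 2)) / 2) {k : ℕ} (hk : 1 ≤ k) :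
    (t k - 1) / t (k + 1) ∈ Set.Icc 0 1 := by
  have hmono j (hj : 1 ≤ j) : t j ≤ t (j + 1) := ht j hj ▸ le_one_add_sqrt_div_two (t j)
  have hone : 1 ≤ t k := by
    induction k, hk using Nat.le_induction with
    | base => exact ht1
    | succ j hj ih => exact ih.trans (hmono j hj)
  have hpos : 0 < t (k + 1) := by linarith [hmono k hk]
  exact ⟨div_nonneg (by linarith) hpos.le, (div_le_one hpos).2 (by linarith [hmono k hk])⟩

end FISTA

theorem stmt17_general {ι m : Type*} [Fintype ι] [DecidableEq ι] [Fintype m] {W : Matrix ι ι ℝ}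
    (hirr : W.IsIrreducible) (hrow : ∀ i, ∑ j, W i j = 1) {A : Matrix m ι ℝ}
    (hA1 : A *ᵥ (fun _ ↦ 1) ≠ 0) (b : m → ℝ) {μ θ : ℝ} (hμ : 0 < μ) (hθ : 0 < θ)
    (hG : (θ • W + (1 - θ) • 1).PosSemidef) {α : ℕ → ℝ} (hα : ∀ k, 1 ≤ k → α k ∈ Set.Icc 0 1) :
    ∃! xs : ι → ℝ, ∀ x y v : ℕ → ι → ℝ,
      (∀ k, 1 ≤ k → x k = (1 + μ • (Aᵀ * A))⁻¹ *ᵥ (v (k - 1) + μ • (Aᵀ *ᵥ b))) →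
      (∀ k, 1 ≤ k → y k = x k + α k • (x k - x (k - 1))) →
      (∀ k, 1 ≤ k → v k = θ • (W *ᵥ y k) + (1 - θ) • y k) →
      ConvergesLinearly x xs := by
  set M : Matrix ι ι ℝ := 1 + μ • (Aᵀ * A)
  set G : Matrix ι ι ℝ := θ • W + (1 - θ) • 1 with hGdef
  set c := μ • (Aᵀ *ᵥ b)
  have hGv v : G *ᵥ v = θ • (W *ᵥ v) + (1 - θ) • v := by
    rw [hGdef, add_mulVec, smul_mulVec, smul_mulVec, one_mulVec]
  have hMG : (M - G).PosDef := posDef_one_add_smul_sub hirr (isSymm_of_smul_add_smul_one hθ.ne'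
    (isHermitian_iff_isSymm.1 hG.isHermitian)) hrow hA1 hμ hθ
  have hM : M.PosDef := by simpa using hMG.add_posSemidef hG
  set a := (M - G)⁻¹ *ᵥ c
  have hfix : a = M⁻¹ *ᵥ (G *ᵥ a + c) := inv_sub_mulVec_eq_inv_mulVec hM.isUnit hMG.isUnit c
  refine ⟨a, fun x y v hx hy hv ↦ ?_, fun xs hxs ↦ ?_⟩
  · refine convergesLinearly_of_eq_inv_mulVec hG hMG c (α := fun k ↦ α (k + 1))
      (fun k ↦ hα _ k.succ_pos) fun k ↦ ?_
    rw [hx _ (by lia), hGv]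
    simp [hv (k + 1), hy (k + 1)]
  · have hconst : ConvergesLinearly (fun _ ↦ a) xs :=
      hxs _ (fun _ ↦ a) (fun _ ↦ G *ᵥ a) (fun _ _ ↦ hfix) (by simp) (fun _ _ ↦ hGv _)
    exact tendsto_nhds_unique hconst.tendsto tendsto_const_nhds

theorem stmt17 (n m : ℕ) (W : Matrix (Fin n) (Fin n) ℝ)
    (hW : W.PosSemidef)
    (hnonneg : ∀ i j, 0 ≤ W i j) (hrow : ∀ i, ∑ j, W i j = 1)
    (hirr : ∀ i j, ∃ k : ℕ, 0 < k ∧ 0 < (W ^ k) i j)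
    (A : Matrix (Fin m) (Fin n) ℝ)
    (hA1 : A *ᵥ (fun _ => (1 : ℝ)) ≠ 0)
    (b : Fin m → ℝ)
    (lam L : ℝ) (hlam : 0 < lam) (hL : 1 ≤ L)
    (μ θ : ℝ) (hμ : μ = (lam * L)⁻¹) (hθ : θ = 1 / L)
    (t α : ℕ → ℝ) (ht1 : t 1 = 1)
    (ht : ∀ k, 1 ≤ k → t (k + 1) = (1 + Real.sqrt (1 + 4 * t k ^ 2)) / 2)
    (hα : ∀ k, 1 ≤ k → α k = (t k - 1) / t (k + 1)) :
    ∃! xs : Fin n → ℝ,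
      ∀ x y v : ℕ → Fin n → ℝ,
        (∀ k, 1 ≤ k → x k =
          ((1 : Matrix (Fin n) (Fin n) ℝ) + μ • (Aᵀ * A))⁻¹ *ᵥ (v (k - 1) + μ • (Aᵀ *ᵥ b))) →
        (∀ k, 1 ≤ k → y k = x k + α k • (x k - x (k - 1))) →
        (∀ k, 1 ≤ k → v k = θ • (W *ᵥ y k) + (1 - θ) • y k) →
        ∃ C, 0 < C ∧ ∃ β, 0 ≤ β ∧ β < 1 ∧ ∃ K, 1 ≤ K ∧ ∀ k, K ≤ k →
          norm2 (x k - xs) ≤ C * β ^ k := by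
  have hθ0 : 0 < θ := by rw [hθ]; positivity
  have hθ1 : θ ≤ 1 := by rw [hθ]; exact (div_le_one (by positivity)).2 hL
  have hG : (θ • W + (1 - θ) • 1).PosSemidef :=
    (hW.smul hθ0.le).add (PosSemidef.one.smul (sub_nonneg.2 hθ1))
  simpa only [convergesLinearly_iff_norm2] using stmt17_general
    ((isIrreducible_iff_exists_pow_pos hnonneg).2 hirr) hrow hA1 b
    (hμ ▸ by positivity : 0 < μ) hθ0 hG
    fun k hk ↦ hα k hk ▸ fista_momentum_mem_Icc ht1.ge ht hk
end
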